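/- Let A be a real n×n matrix and let D₀ be an invertible real diagonal matrix such that D₀A + AᵀD₀ is positive definite. Then for every real diagonal matrix D having the same sign pattern as D₀ (that is, d_ii·(D₀)_ii > 0 for all i), every λ ∈ σ(A + D) has Re λ ≠ 0, i.e., A + D has no purely imaginary eigenvalues. -/

import Mathlib

open Matrix

/-- The spectrum of a real square matrix, viewed as a subset of `ℂ`:
the set of complex roots of its characteristic polynomial. -/
def spec {m : Type*} [Fintype m] [DecidableEq m] (M : Matrix m m ℝ) : Set ℂ :=
  spectrum ℂ (M.map (Complex.ofReal ·))

/-- A real matrix `W` is positive definite (as a quadratic form):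
`xᵀ W x > 0` for every nonzero real vector `x`. -/
def PosDefQ {n : ℕ} (W : Matrix (Fin n) (Fin n) ℝ) : Prop :=
  ∀ x : Fin n → ℝ, x ≠ 0 → 0 < x ⬝ᵥ (W *ᵥ x)

/-!
If `M v = z v`, then `v* (H M + M* H) v = 2 (Re z) (v* H v)`, so positive definiteness of
`H M + M* H` forces `Re z ≠ 0`. For `H = D₀` this applies to `M = A + D`, because passing from `A`
to `A + D` only adds the positive semidefinite diagonal matrix `2 D D₀` to `D₀ A + Aᵀ D₀`. Real
positive definiteness passes to complex vectors `v` through a factorization `W = Bᵀ B` with `B`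
invertible.
-/

section Lyapunov

open scoped ComplexOrder

variable {ι : Type*} [Fintype ι]

theorem exists_mulVec_eq_smul_of_mem_spectrum [DecidableEq ι] {K : Type*} [Field K]
    {M : Matrix ι ι K} {z : K} (hz : z ∈ spectrum K M) : ∃ v ≠ 0, M *ᵥ v = z • v := by
  rw [← spectrum_toLin', ← Module.End.hasEigenvalue_iff_mem_spectrum] at hz
  obtain ⟨v, hv⟩ := hz.exists_hasEigenvector
  exact ⟨v, hv.2, hv.apply_eq_smul⟩

theorem star_dotProduct_mul_add_conjTranspose_mul_mulVec {R : Type*} [CommRing R] [StarRing R]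
    (H : Matrix ι ι R) {M : Matrix ι ι R} {v : ι → R} {z : R} (hv : M *ᵥ v = z • v) :
    star v ⬝ᵥ ((H * M + Mᴴ * H) *ᵥ v) = (z + star z) * (star v ⬝ᵥ (H *ᵥ v)) := by
  have h_right : star v ⬝ᵥ ((H * M) *ᵥ v) = z * (star v ⬝ᵥ (H *ᵥ v)) := by
    rw [← mulVec_mulVec, hv, mulVec_smul, dotProduct_smul, smul_eq_mul]
  have h_left : star v ⬝ᵥ ((Mᴴ * H) *ᵥ v) = star z * (star v ⬝ᵥ (H *ᵥ v)) := by
    rw [← mulVec_mulVec, dotProduct_mulVec, ← star_mulVec, hv, star_smul, smul_dotProduct,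
      smul_eq_mul]
  rw [add_mulVec, dotProduct_add, h_right, h_left, add_mul]

theorem re_ne_zero_of_mem_spectrum_of_posDef [DecidableEq ι] {𝕜 : Type*} [RCLike 𝕜]
    {H M : Matrix ι ι 𝕜} (hHM : (H * M + Mᴴ * H).PosDef) {z : 𝕜} (hz : z ∈ spectrum 𝕜 M) :
    RCLike.re z ≠ 0 := by
  intro hre
  obtain ⟨v, hv0, hv⟩ := exists_mulVec_eq_smul_of_mem_spectrum hz
  have hpos := hHM.dotProduct_mulVec_pos hv0
  have hz_add_star : z + star z = 0 := by
    rw [RCLike.star_def, RCLike.add_conj, hre, RCLike.ofReal_zero, mul_zero]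
  rw [star_dotProduct_mul_add_conjTranspose_mul_mulVec H hv, hz_add_star, zero_mul] at hpos
  exact hpos.false

open scoped MatrixOrder Matrix.Norms.L2Operator in
theorem exists_isUnit_conjTranspose_mul_self_of_posDef [DecidableEq ι] {𝕜 : Type*} [RCLike 𝕜]
    {W : Matrix ι ι 𝕜} (hW : W.PosDef) : ∃ B : Matrix ι ι 𝕜, IsUnit B ∧ W = Bᴴ * B :=
  CStarAlgebra.isStrictlyPositive_iff_eq_star_mul_self.mp hW.isStrictlyPositive

theorem posDef_map {m 𝕜 K : Type*} [Finite m] [RCLike 𝕜] [Field K] [PartialOrder K] [StarRing K]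
    [StarOrderedRing K] (f : 𝕜 →+* K) (hf : Function.Semiconj f star star) {W : Matrix m m 𝕜}
    (hW : W.PosDef) : (W.map f).PosDef := by
  classical
  have := Fintype.ofFinite m
  obtain ⟨B, hB, rfl⟩ := exists_isUnit_conjTranspose_mul_self_of_posDef hW
  rw [Matrix.map_mul, conjTranspose_map f hf]
  exact .conjTranspose_mul_self _ (mulVec_injective_of_isUnit (hB.map f.mapMatrix))

theorem re_ne_zero_of_mem_spec_of_posDef [DecidableEq ι] {S M : Matrix ι ι ℝ}
    (hSM : (S * M + Mᵀ * S).PosDef) {z : ℂ} (hz : z ∈ spec M) : z.re ≠ 0 := by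
  have hf : Function.Semiconj Complex.ofRealHom star star := fun x => (Complex.conj_ofReal x).symm
  have hSM' := posDef_map Complex.ofRealHom hf hSM
  rw [← conjTranspose_eq_transpose_of_trivial, Matrix.map_add _ (map_add _), Matrix.map_mul,
    Matrix.map_mul, conjTranspose_map _ hf] at hSM'
  exact re_ne_zero_of_mem_spectrum_of_posDef hSM' hz

theorem isHermitian_mul_add_conjTranspose_mul {R : Type*} [NonUnitalSemiring R] [StarRing R]
    {H : Matrix ι ι R} (hH : H.IsHermitian) (M : Matrix ι ι R) :
    (H * M + Mᴴ * H).IsHermitian := by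
  simpa only [conjTranspose_mul, hH.eq] using isHermitian_add_transpose_self (H * M)

theorem PosDefQ.posDef {n : ℕ} {W : Matrix (Fin n) (Fin n) ℝ} (hW : PosDefQ W)
    (hW_symm : W.IsHermitian) : W.PosDef :=
  .of_dotProduct_mulVec_pos hW_symm fun x hx => hW x hx

theorem diagonal_mul_add_add_transpose_mul_diagonal [DecidableEq ι] {R : Type*} [CommSemiring R]
    (A : Matrix ι ι R) (d₀ d : ι → R) :
    diagonal d₀ * (A + diagonal d) + (A + diagonal d)ᵀ * diagonal d₀ =
      (diagonal d₀ * A + Aᵀ * diagonal d₀) + 2 • diagonal (d * d₀) := by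
  have hd : diagonal d * diagonal d₀ = diagonal (d * d₀) := diagonal_mul_diagonal d d₀
  have hd₀ : diagonal d₀ * diagonal d = diagonal (d * d₀) := by
    rw [mul_comm d d₀]
    exact diagonal_mul_diagonal d₀ d
  rw [transpose_add, diagonal_transpose, mul_add, add_mul, hd, hd₀, two_nsmul, add_add_add_comm]

theorem stmt18_general [DecidableEq ι] (A : Matrix ι ι ℝ) (d₀ : ι → ℝ)
    (hLyap : (diagonal d₀ * A + Aᵀ * diagonal d₀).PosDef) (d : ι → ℝ)
    (hd : ∀ i, 0 ≤ d i * d₀ i) : ∀ z ∈ spec (A + diagonal d), z.re ≠ 0 := by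
  intro z hz
  have hD : (diagonal (d * d₀)).PosSemidef := .diagonal hd
  refine re_ne_zero_of_mem_spec_of_posDef (S := diagonal d₀) ?_ hz
  rw [diagonal_mul_add_add_transpose_mul_diagonal]
  exact hLyap.add_posSemidef (hD.smul zero_le_two)

end Lyapunov

theorem stmt18 {n : ℕ} (A : Matrix (Fin n) (Fin n) ℝ)
    (d₀ : Fin n → ℝ) (hd₀ : ∀ i, d₀ i ≠ 0)
    (hLyap : PosDefQ ((Matrix.diagonal d₀) * A + Aᵀ * (Matrix.diagonal d₀))) :
    ∀ d : Fin n → ℝ, (∀ i, 0 < d i * d₀ i) →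
      ∀ z ∈ spec (A + Matrix.diagonal d), z.re ≠ 0 := by
  have hW := hLyap.posDef (isHermitian_mul_add_conjTranspose_mul (isHermitian_diagonal d₀) A)
  exact fun d hd => stmt18_general A d₀ hW d fun i => (hd i).le
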